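/- arXiv:math/0301186 — 3 statements merged into one kernel-verified Lean document; each statement's English description precedes it below -/
import Mathlib

section
/- Let F : C_k → C_K be a coefficient extension for the Galois extension K/k with group G and let X be an object of C_k. Let Y and Z be K/k-forms of X with isomorphisms f : FY → FX and g : FZ → FX in C_K, and suppose that the associated cocycles are cohomologous, i.e., there exists b ∈ Aut_{C_K}(FX) such that g ∘ (s·g^{-1}) = b^{-1} ∘ (f ∘ (s·f^{-1})) ∘ (s·b) for all s ∈ G. Then Y and Z are isomorphic in C_k. -/
/-!
The isomorphism `g⁻¹ ∘ b⁻¹ ∘ f : FY ≅ FZ` is Galois invariant, so (CE2) descends it to `Ck`.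
Indeed, the coboundary relation expresses `s·g⁻¹` as
`(g⁻¹ ∘ b⁻¹ ∘ f) ∘ (s·f⁻¹) ∘ (s·b)`; substituting this into
`(s·g⁻¹) ∘ (s·b⁻¹) ∘ (s·f)`, the factors twisted by `s` cancel by (CE1).
-/

open CategoryTheory

/-- A *coefficient extension* from `k` to `K` (for the Galois extension `K/k` with
Galois group `G = Gal(K/k) = (K ≃ₐ[k] K)`): categories `Ck`, `CK`, a functor `F : Ck ⥤ CK`,
and for all objects `Y Z : Ck` a left `G`-action on the isomorphisms `F.obj Y ≅ F.obj Z`,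
compatible with composition (CE1) and such that the fixed points are exactly the
isomorphisms coming from `Ck` (CE2). -/
structure CoefficientExtension (k K : Type*) [Field k] [Field K] [Algebra k K]
    (Ck : Type*) [Category Ck] (CK : Type*) [Category CK] where
  F : Ck ⥤ CK
  act : ∀ (Y Z : Ck), (K ≃ₐ[k] K) → (F.obj Y ≅ F.obj Z) → (F.obj Y ≅ F.obj Z)
  act_one : ∀ (Y Z : Ck) (f : F.obj Y ≅ F.obj Z), act Y Z 1 f = f
  act_mul : ∀ (Y Z : Ck) (s t : K ≃ₐ[k] K) (f : F.obj Y ≅ F.obj Z),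
    act Y Z (s * t) f = act Y Z s (act Y Z t f)
  ce1 : ∀ (X Y Z : Ck) (s : K ≃ₐ[k] K) (g : F.obj X ≅ F.obj Y) (f : F.obj Y ≅ F.obj Z),
    act X Z s (g ≪≫ f) = act X Y s g ≪≫ act Y Z s f
  ce2 : ∀ (Y Z : Ck) (f : F.obj Y ≅ F.obj Z),
    (∀ s : K ≃ₐ[k] K, act Y Z s f = f) ↔ ∃ u : Y ≅ Z, F.mapIso u = f

/-- **Galois descent: cohomologous cocycles give isomorphic forms.**
If the cocycles of two `K/k`-forms `Y`, `Z` of `X` are cohomologous, then `Y ≅ Z` in `Ck`. -/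
theorem coefficientExtension_cohomologous_forms_iso
    (k K : Type*) [Field k] [Field K] [Algebra k K] [IsGalois k K]
    (Ck : Type*) [Category Ck] (CK : Type*) [Category CK]
    (E : CoefficientExtension k K Ck CK) (X Y Z : Ck)
    (f : E.F.obj Y ≅ E.F.obj X) (g : E.F.obj Z ≅ E.F.obj X)
    (b : E.F.obj X ≅ E.F.obj X)
    (hb : ∀ s : K ≃ₐ[k] K,
      E.act X Z s g.symm ≪≫ g
        = E.act X X s b ≪≫ (E.act X Y s f.symm ≪≫ f) ≪≫ b.symm) :
    Nonempty (Y ≅ Z) := by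
  -- The action preserves identities, because these come from `Ck`.
  have act_refl (W : Ck) (s : K ≃ₐ[k] K) : E.act W W s (Iso.refl _) = Iso.refl _ :=
    (E.ce2 W W (Iso.refl _)).2 ⟨Iso.refl W, E.F.mapIso_refl W⟩ s
  obtain ⟨u, -⟩ := (E.ce2 Y Z (f ≪≫ b.symm ≪≫ g.symm)).1 fun s => by
    have hg : E.act X Z s g.symm
        = E.act X X s b ≪≫ E.act X Y s f.symm ≪≫ f ≪≫ b.symm ≪≫ g.symm := by
      have h := congrArg (· ≪≫ g.symm) (hb s)
      simpa [Iso.trans_assoc] using h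
    have hcancel : E.act Y X s f ≪≫ E.act X X s b.symm ≪≫ E.act X X s b ≪≫ E.act X Y s f.symm
        = Iso.refl _ := by
      simp only [← E.ce1, Iso.symm_self_id_assoc, Iso.self_symm_id, act_refl]
    calc E.act Y Z s (f ≪≫ b.symm ≪≫ g.symm)
        = (E.act Y X s f ≪≫ E.act X X s b.symm ≪≫ E.act X X s b ≪≫ E.act X Y s f.symm)
            ≪≫ f ≪≫ b.symm ≪≫ g.symm := by
          simp only [E.ce1, hg, Iso.trans_assoc]
      _ = f ≪≫ b.symm ≪≫ g.symm := by rw [hcancel, Iso.refl_trans]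
  exact ⟨u⟩
end

section
/- Let F : C_k → C_K be a coefficient extension for the Galois extension K/k with group G, let X be an object of C_k, let Y be a K/k-form of X with isomorphism f : FY → FX in C_K, and set a_s := f ∘ (s·f^{-1}) for s ∈ G. Assume that the map Aut_{C_k}(Y) → Aut_{C_K}(FY), u ↦ F(u), is injective. Then the map u ↦ f ∘ F(u) ∘ f^{-1} is a group isomorphism from Aut_{C_k}(Y) onto the twisted fixed group {b ∈ Aut_{C_K}(FX) : a_s ∘ (s·b) ∘ a_s^{-1} = b for all s ∈ G}. -/
/-!
Conjugation by `f` carries the twisted action `b ↦ a_s ∘ (s•b) ∘ a_s⁻¹` on `Aut (FX)` to the given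
action on `Aut (FY)`: since `a_s = f ∘ (s•f⁻¹)`, compatibility with composition gives
`a_s ∘ (s•b) ∘ a_s⁻¹ = f ∘ (s•(f⁻¹ ∘ b ∘ f)) ∘ f⁻¹` (`act_twist`). Hence `b` is fixed by the twisted
action exactly when `f⁻¹ ∘ b ∘ f` is `G`-fixed, that is, by (CE2), of the form `F u`.
-/

open CategoryTheory

namespace CoefficientExtension

variable {k K : Type*} [Field k] [Field K] [Algebra k K]
  {Ck : Type*} [Category Ck] {CK : Type*} [Category CK] (E : CoefficientExtension k K Ck CK)

theorem act_refl (Y : Ck) (s : K ≃ₐ[k] K) :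
    E.act Y Y s (Iso.refl _) = Iso.refl _ := by
  have h := E.ce1 Y Y Y s (Iso.refl _) (Iso.refl _)
  rw [Iso.refl_trans] at h
  -- `s • 1` is idempotent and invertible, so it is the identity.
  have h₂ := congrArg (fun g => (E.act Y Y s (Iso.refl _)).symm ≪≫ g) h
  simpa using h₂.symm

theorem act_symm {Y Z : Ck} (s : K ≃ₐ[k] K) (f : E.F.obj Y ≅ E.F.obj Z) :
    (E.act Z Y s f.symm).symm = E.act Y Z s f := by
  have h := E.ce1 Y Z Y s f f.symm
  rw [Iso.self_symm_id, act_refl] at h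
  have h₂ := congrArg (fun g => g ≪≫ (E.act Z Y s f.symm).symm) h
  simpa using h₂

/-- The action twisted by the cocycle `a_s = f ∘ (s•f⁻¹)` is the conjugate by `f` of the
original action. -/
theorem act_twist {X Y : Ck} (s : K ≃ₐ[k] K) (f : E.F.obj Y ≅ E.F.obj X)
    (b : E.F.obj X ≅ E.F.obj X) :
    (E.act X Y s f.symm ≪≫ f).symm ≪≫ E.act X X s b ≪≫ (E.act X Y s f.symm ≪≫ f) =
      f.symm ≪≫ E.act Y Y s (f ≪≫ b ≪≫ f.symm) ≪≫ f := by
  rw [E.ce1 Y X Y, E.ce1 X X Y, Iso.trans_symm, act_symm]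
  simp only [Iso.trans_assoc]

end CoefficientExtension

theorem conj_eq_iff {C : Type*} [Category C] {A B : C} (f : A ≅ B) (g : A ≅ A) (b : B ≅ B) :
    f.symm ≪≫ g ≪≫ f = b ↔ g = f ≪≫ b ≪≫ f.symm := by
  constructor
  · rintro rfl
    simp
  · rintro rfl
    simp

/-- **automorphisms of a form as a twisted fixed group.**
If `F` is injective on automorphisms of `Y`, then `u ↦ f ∘ F(u) ∘ f⁻¹` is a group
isomorphism from `Aut_{Ck}(Y)` onto the twisted fixed group
`{b ∈ Aut_{CK}(FX) | a_s ∘ (s•b) ∘ a_s⁻¹ = b for all s}`, where `a_s = f ∘ (s•f⁻¹)`. -/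
theorem coefficientExtension_aut_of_form
    (k K : Type*) [Field k] [Field K] [Algebra k K] [IsGalois k K]
    (Ck : Type*) [Category Ck] (CK : Type*) [Category CK]
    (E : CoefficientExtension k K Ck CK) (X Y : Ck)
    (f : E.F.obj Y ≅ E.F.obj X)
    (hinj : Function.Injective (fun u : Y ≅ Y => E.F.mapIso u)) :
    ∀ a : (K ≃ₐ[k] K) → (E.F.obj X ≅ E.F.obj X),
      (a = fun s => E.act X Y s f.symm ≪≫ f) →
      ∀ Φ : (Y ≅ Y) → (E.F.obj X ≅ E.F.obj X),
        (Φ = fun u => f.symm ≪≫ E.F.mapIso u ≪≫ f) →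
        Function.Injective Φ ∧ (∀ u v : Y ≅ Y, Φ (u ≪≫ v) = Φ u ≪≫ Φ v) ∧
        Set.range Φ
          = {b : E.F.obj X ≅ E.F.obj X |
              ∀ s : K ≃ₐ[k] K, (a s).symm ≪≫ E.act X X s b ≪≫ a s = b} := by
  rintro a rfl Φ rfl
  refine ⟨fun u v h => hinj ?_, fun u v => ?_, ?_⟩
  · simpa using (conj_eq_iff f _ _).1 h
  · simp [Functor.mapIso_trans]
  · ext b
    simp only [Set.mem_range, Set.mem_ofPred_eq, E.act_twist, conj_eq_iff]
    exact (E.ce2 Y Y _).symm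
end

section
/- Let m ≥ 3 be an integer and K an algebraically closed field with char K = 0 or char K > m. Let C := {[x:y:z] ∈ P²(K) : x^m + y^m + z^m = 0} be the set of points of the Fermat curve of degree m in the projective plane over K, and let τ : P²(K) → P²(K) be the involution [x:y:z] ↦ [y:x:z]. Then the number of points of C fixed by τ equals m if m is even, and equals m + 1 if m is odd. -/
/-!
A vector `v ≠ 0` represents a fixed point of the swap exactly when it is an eigenvector. The
eigenvalue `1` gives the points `[a:a:z]`, the eigenvalue `-1` only the point `[1:-1:0]`. The
curve does not contain `[0:0:1]`, so its points on the first locus are `[1:1:z]` with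
`z ^ m = -2`; there are `m` of them, because `X ^ m + 2` is separable when neither `m` nor `2`
vanishes in `K`. The point `[1:-1:0]` lies on the curve exactly when `1 + (-1) ^ m = 0`, that is
when `m` is odd, and it differs from every `[1:1:z]` because `2 ≠ 0`.
-/

open Polynomial in
theorem ncard_setOf_pow_eq {K : Type*} [Field K] [IsAlgClosed K] {m : ℕ} (hm : (m : K) ≠ 0)
    {c : K} (hc : c ≠ 0) : {z : K | z ^ m = c}.ncard = m := by
  have hm0 : 0 < m := Nat.pos_of_ne_zero (by rintro rfl; simp at hm)
  have hsep : (X ^ m - C c : K[X]).Separable := separable_X_pow_sub_C c hm hc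
  have h := card_rootSet_eq_natDegree (K := K) hsep (IsAlgClosed.splits _)
  rw [natDegree_X_pow_sub_C, ← Nat.card_eq_fintype_card, Nat.card_coe_set_eq] at h
  convert h using 2
  ext z
  rw [mem_rootSet]
  simp [X_pow_sub_C_ne_zero hm0 c, sub_eq_zero]

theorem natCast_ne_zero_of_ringChar {K : Type*} [Field K] {m n : ℕ}
    (hchar : ringChar K = 0 ∨ m < ringChar K) (hn : n ≠ 0) (hnm : n ≤ m) : (n : K) ≠ 0 := by
  intro h
  have hd := (ringChar.spec K n).1 h
  rcases hchar with h0 | h0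
  · rw [h0, zero_dvd_iff] at hd
    exact hn hd
  · have := Nat.le_of_dvd (Nat.pos_of_ne_zero hn) hd
    omega

/-- The point `[1:1:z]`. -/
def diagPoint {K : Type*} [Field K] (z : K) : Projectivization K (Fin 3 → K) :=
  Projectivization.mk K ![1, 1, z] fun h => one_ne_zero (congrFun h 0)

/-- The point `[1:-1:0]`. -/
def antiPoint (K : Type*) [Field K] : Projectivization K (Fin 3 → K) :=
  Projectivization.mk K ![1, -1, 0] fun h => one_ne_zero (congrFun h 0)

theorem diagPoint_injective {K : Type*} [Field K] :
    Function.Injective (diagPoint : K → Projectivization K (Fin 3 → K)) := by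
  intro z w h
  obtain ⟨a, ha⟩ := (Projectivization.mk_eq_mk_iff' K _ _ _ _).1 h
  have h0 := congrFun ha 0
  have h2 := congrFun ha 2
  simp at h0 h2
  simp [← h2, h0]

theorem antiPoint_ne_diagPoint {K : Type*} [Field K] (h2 : (2 : K) ≠ 0) (z : K) :
    antiPoint K ≠ diagPoint z := by
  intro h
  obtain ⟨a, ha⟩ := (Projectivization.mk_eq_mk_iff' K _ _ _ _).1 h
  have h0 := congrFun ha 0
  have h1 := congrFun ha 1
  simp at h0 h1
  apply h2
  linear_combination h1 - h0

theorem map_swap_mk_eq_iff {K : Type*} [Field K] (v : Fin 3 → K) (hv : v ≠ 0) :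
    Projectivization.map (LinearMap.funLeft K K (Equiv.swap (0 : Fin 3) 1))
        (LinearMap.funLeft_injective_of_surjective K K _
          (Equiv.swap (0 : Fin 3) 1).surjective) (Projectivization.mk K v hv)
        = Projectivization.mk K v hv ↔
      ∃ a : K, a * v 0 = v 1 ∧ a * v 1 = v 0 ∧ a * v 2 = v 2 := by
  rw [Projectivization.map_mk, Projectivization.mk_eq_mk_iff']
  have hs : Equiv.swap (0 : Fin 3) 1 2 = 2 := by decide
  simp [funext_iff, Fin.forall_fin_succ, LinearMap.funLeft_apply, hs]

/-- The fixed points of the swap on the Fermat curve; `[1:-1:0]` occurs only for odd `m`. -/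
theorem swap_fixed_on_fermat_iff {K : Type*} [Field K] {m : ℕ} (hm : m ≠ 0) (h2 : (2 : K) ≠ 0)
    (p : Projectivization K (Fin 3 → K)) :
    ((∃ (v : Fin 3 → K) (hv : v ≠ 0),
          p = Projectivization.mk K v hv ∧ v 0 ^ m + v 1 ^ m + v 2 ^ m = 0) ∧
        Projectivization.map (LinearMap.funLeft K K (Equiv.swap (0 : Fin 3) 1))
          (LinearMap.funLeft_injective_of_surjective K K _
            (Equiv.swap (0 : Fin 3) 1).surjective) p = p) ↔
      (∃ z : K, z ^ m = -2 ∧ diagPoint z = p) ∨ (Odd m ∧ p = antiPoint K) := by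
  constructor
  · rintro ⟨⟨v, hv, rfl, hc⟩, hp⟩
    obtain ⟨a, h01, h10, h22⟩ := (map_swap_mk_eq_iff v hv).1 hp
    have h0 : v 0 ≠ 0 := by
      intro h0
      have h1 : v 1 = 0 := by rw [← h01, h0, mul_zero]
      have hv2 : v 2 = 0 := by simpa [h0, h1, hm] using hc
      exact hv (by ext i; fin_cases i <;> simp [h0, h1, hv2])
    -- The swap is an involution, so its eigenvalue satisfies `a ^ 2 = 1`.
    have ha : (a - 1) * (a + 1) = 0 := by
      apply mul_right_cancel₀ h0
      linear_combination a * h01 + h10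
    rcases mul_eq_zero.1 ha with ha | ha
    · obtain rfl : a = 1 := sub_eq_zero.1 ha
      rw [one_mul] at h01
      left
      refine ⟨v 2 / v 0, ?_, ?_⟩
      · rw [div_pow, div_eq_iff (pow_ne_zero m h0)]
        rw [← h01] at hc
        linear_combination hc
      · refine (Projectivization.mk_eq_mk_iff' K _ _ _ _).2 ⟨(v 0)⁻¹, ?_⟩
        ext i
        fin_cases i
        · simp [h0]
        · simp [← h01, h0]
        · simp [div_eq_inv_mul]
    · obtain rfl : a = -1 := eq_neg_of_add_eq_zero_left ha
      have h1 : v 1 = -v 0 := by rw [← h01]; ring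
      have hv2 : v 2 = 0 := by
        have : (2 : K) * v 2 = 0 := by linear_combination -h22
        simpa [h2] using this
      right
      constructor
      · by_contra ho
        rw [Nat.not_odd_iff_even] at ho
        rw [h1, hv2, ho.neg_pow, zero_pow hm, add_zero, ← two_mul] at hc
        exact mul_ne_zero h2 (pow_ne_zero m h0) hc
      · refine (Projectivization.mk_eq_mk_iff' K _ _ _ _).2 ⟨v 0, ?_⟩
        ext i
        fin_cases i <;> simp [h1, hv2]
  · rintro (⟨z, hz, rfl⟩ | ⟨ho, rfl⟩)
    · refine ⟨⟨_, _, rfl, ?_⟩, (map_swap_mk_eq_iff _ _).2 ⟨1, ?_⟩⟩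
      · simp [hz]
        norm_num
      · simp
    · refine ⟨⟨_, _, rfl, ?_⟩, (map_swap_mk_eq_iff _ _).2 ⟨-1, ?_⟩⟩
      · simp [ho.neg_pow, hm]
      · simp

/-- The involution `[x:y:z] ↦ [y:x:z]` of `ℙ²(K)` has exactly `m` fixed
points on the Fermat curve `x^m + y^m + z^m = 0` if `m` is even, and `m + 1` if `m` is odd. -/
theorem fermat_curve_swap_fixed_points_count
    (m : ℕ) (hm : 3 ≤ m)
    (K : Type*) [Field K] [IsAlgClosed K]
    (hchar : ringChar K = 0 ∨ m < ringChar K) :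
    {p : Projectivization K (Fin 3 → K) |
        (∃ (v : Fin 3 → K) (hv : v ≠ 0),
          p = Projectivization.mk K v hv ∧ v 0 ^ m + v 1 ^ m + v 2 ^ m = 0) ∧
        Projectivization.map (LinearMap.funLeft K K (Equiv.swap (0 : Fin 3) 1))
          (LinearMap.funLeft_injective_of_surjective K K _
            (Equiv.swap (0 : Fin 3) 1).surjective) p = p}.ncard
      = if Even m then m else m + 1 := by
  have hmK : (m : K) ≠ 0 := natCast_ne_zero_of_ringChar hchar (by omega) le_rfl
  have h2 : (2 : K) ≠ 0 := by
    exact_mod_cast natCast_ne_zero_of_ringChar (n := 2) hchar (by omega) (by omega)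
  simp only [swap_fixed_on_fermat_iff (show m ≠ 0 by omega) h2]
  have hroots : {z : K | z ^ m = -2}.ncard = m := ncard_setOf_pow_eq hmK (neg_ne_zero.2 h2)
  have hdiag : (diagPoint '' {z : K | z ^ m = -2}).ncard = m := by
    rw [Set.ncard_image_of_injective _ diagPoint_injective, hroots]
  -- `Set.ncard` vanishes on infinite sets, so a nonzero value gives finiteness.
  have hfin : (diagPoint '' {z : K | z ^ m = -2}).Finite :=
    Set.finite_of_ncard_ne_zero (by omega)
  split_ifs with he
  · have ho : ¬ Odd m := Nat.not_odd_iff_even.2 he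
    simp only [ho, false_and, or_false]
    exact hdiag
  · have ho : Odd m := Nat.not_even_iff_odd.1 he
    simp only [ho, true_and]
    have hnot : antiPoint K ∉ diagPoint '' {z : K | z ^ m = -2} := by
      rintro ⟨z, -, hz⟩
      exact antiPoint_ne_diagPoint h2 z hz.symm
    rw [← hdiag, ← Set.ncard_insert_of_notMem hnot hfin, hdiag]
    congr 1
    ext p
    simp [or_comm]
end
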